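/- arXiv:2302.13657 — 3 statements merged into one kernel-verified Lean document; each statement's English description precedes it below -/
import Mathlib

section
/- Let S be a σ-symbol and t_Q an S-term. For every σ-structure Q that is homomorphically equivalent to T(t_Q), the structure D(t_Q) is a dual of Q; that is, for every σ-structure A, there is a homomorphism A → D(t_Q) if and only if there is no homomorphism Q → A. -/
/-!
A vertex `a` of `A` satisfies a V-term `t` when some homomorphism `T(t) → A` sends the root to `a`.
As `T(edge_R(ts))` glues the trees `T(ts j)` along a single tuple, satisfaction obeys a recursion
that matches condition (D1).

If the tree of `t_Q` does not map to `A`, send each vertex of `A` to the tuple recording which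
V-subterms of `t_Q` it satisfies: the recursion gives (D1), and a violation of (D2) would yield a
homomorphism from the tree. Conversely, `D(t_Q)` itself receives no homomorphism from the tree:
by (D1), a vertex `v` satisfying a V-subterm `t` has `v_t = true`, so the image of the root edge
would violate (D2).
-/

/-- A relational signature: a type of relation symbols, each with a positive arity. -/
structure Signature : Type 1 where
  symb : Type
  ar : symb → ℕ
  ar_pos : ∀ R, 0 < ar R

/-- A relational structure over the signature `σ`. -/
structure Struct (σ : Signature) : Type 1 where
  dom : Type
  rel : ∀ R : σ.symb, Set (Fin (σ.ar R) → dom)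

variable {σ τ υ : Signature}

/-- `f` is a homomorphism of `σ`-structures from `A` to `B`. -/
def IsHom (A B : Struct σ) (f : A.dom → B.dom) : Prop :=
  ∀ R : σ.symb, ∀ x ∈ A.rel R, (fun i => f (x i)) ∈ B.rel R

/-- `A → B`: there exists a homomorphism from `A` to `B`. -/
def HomEx (A B : Struct σ) : Prop := ∃ f, IsHom A B f

/-- Terms over `σ` whose denotation is a tree rooted in a vertex: `vertex` is a V-term, and
`pr R i ts` denotes the V-term `pr_i(edge_R(ts))`.  (An R-term `edge_R(t_1, …, t_k)` is
represented by the symbol `R` together with the tuple `ts` of V-terms.) -/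
inductive VTerm (σ : Signature) : Type
  | vertex : VTerm σ
  | pr (R : σ.symb) (i : Fin (σ.ar R)) (ts : Fin (σ.ar R) → VTerm σ) : VTerm σ

/-- The domain of the tree denoted by a V-term. -/
def VTerm.domType : VTerm σ → Type
  | .vertex => PUnit
  | .pr R _ ts => (i : Fin (σ.ar R)) × (ts i).domType

/-- The root of the tree denoted by a V-term. -/
def VTerm.root : (t : VTerm σ) → t.domType
  | .vertex => PUnit.unit
  | .pr _ i ts => ⟨i, (ts i).root⟩

/-- The domain of the tree denoted by the R-term `edge_R(ts)`: the disjoint union of the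
domains of the subtrees. -/
def edgeDom (R : σ.symb) (ts : Fin (σ.ar R) → VTerm σ) : Type :=
  (i : Fin (σ.ar R)) × (ts i).domType

/-- The root edge of the tree denoted by the R-term `edge_R(ts)`. -/
def edgeRoot (R : σ.symb) (ts : Fin (σ.ar R) → VTerm σ) : Fin (σ.ar R) → edgeDom R ts :=
  fun i => ⟨i, (ts i).root⟩

/-- The relations of the tree denoted by a V-term: the relations of the disjoint subtrees,
together with the root edge. -/
def VTerm.rel : (t : VTerm σ) → ∀ S : σ.symb, Set (Fin (σ.ar S) → t.domType)
  | .vertex, _ => ∅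
  | .pr R _ ts, S =>
      {x | ∃ i : Fin (σ.ar R), ∃ y ∈ (ts i).rel S, x = fun j => ⟨i, y j⟩} ∪
      {x | ∃ h : R = S, x = fun j => edgeRoot R ts (Fin.cast (congrArg σ.ar h.symm) j)}

/-- The tree `T(t)` denoted by a V-term `t`. -/
def VTerm.tree (t : VTerm σ) : Struct σ := ⟨t.domType, t.rel⟩

/-- The tree `T(t)` denoted by the R-term `t = edge_R(ts)`. -/
def ETerm.tree (R : σ.symb) (ts : Fin (σ.ar R) → VTerm σ) : Struct σ where
  dom := edgeDom R ts
  rel S :=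
    {x | ∃ i : Fin (σ.ar R), ∃ y ∈ (ts i).rel S, x = fun j => ⟨i, y j⟩} ∪
    {x | ∃ h : R = S, x = fun j => edgeRoot R ts (Fin.cast (congrArg σ.ar h.symm) j)}

/-- The V-subterms of a V-term. -/
def VTerm.vsub : VTerm σ → Set (VTerm σ)
  | .vertex => {.vertex}
  | .pr R i ts => insert (.pr R i ts) (⋃ j, (ts j).vsub)

/-- The S-subterms of a V-term, for each `σ`-symbol `S` (an S-term `edge_S(us)` being
represented by the tuple `us`). -/
def VTerm.esub : VTerm σ → ∀ S : σ.symb, Set (Fin (σ.ar S) → VTerm σ)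
  | .vertex, _ => ∅
  | .pr R _ ts, S =>
      {us | ∃ h : R = S, us = fun j => ts (Fin.cast (congrArg σ.ar h.symm) j)} ∪
      {us | ∃ j, us ∈ (ts j).esub S}

/-- A term is either a V-term or an R-term `edge_R(ts)` for some symbol `R`. -/
def Term (σ : Signature) : Type := VTerm σ ⊕ (Σ S : σ.symb, Fin (σ.ar S) → VTerm σ)

/-- The tree denoted by a term. -/
def Term.tree : Term σ → Struct σ
  | .inl t => t.tree
  | .inr ⟨S, ts⟩ => ETerm.tree S ts

/-- The V-subterms of a term. -/
def Term.vsub : Term σ → Set (VTerm σ)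
  | .inl t => t.vsub
  | .inr ⟨_, ts⟩ => ⋃ j, (ts j).vsub

/-- The S-subterms of a term. -/
def Term.esub : Term σ → ∀ S : σ.symb, Set (Fin (σ.ar S) → VTerm σ)
  | .inl t => t.esub
  | .inr ⟨R, ts⟩ => fun S =>
      {us | ∃ h : R = S, us = fun j => ts (Fin.cast (congrArg σ.ar h.symm) j)} ∪
      {us | ∃ j, us ∈ (ts j).esub S}

/-- Tuples of booleans indexed by the V-terms in `TV` whose entry at `vertex` is `true`. -/
def BDom (TV : Set (VTerm σ)) : Type :=
  {v : {t : VTerm σ // t ∈ TV} → Bool // ∀ h : VTerm.vertex ∈ TV, v ⟨.vertex, h⟩ = true}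

open Classical in
/-- The entry of `v` at the V-term `t` (by convention `false` if `t ∉ TV`). -/
noncomputable def bext (TV : Set (VTerm σ)) (v : BDom TV) (t : VTerm σ) : Bool :=
  if h : t ∈ TV then v.1 ⟨t, h⟩ else false

/-- `&ₜ(vs) = (vs 1)_{us 1} ∧ ⋯ ∧ (vs k)_{us k}` for the R-term `t = edge_R(us)`. -/
def andT (TV : Set (VTerm σ)) {R : σ.symb} (us : Fin (σ.ar R) → VTerm σ)
    (vs : Fin (σ.ar R) → BDom TV) : Prop :=
  ∀ j, bext TV (vs j) (us j) = true

/-- The dual structure `D(t_Q)` of the S-term `t_Q = edge_S(tsQ)`. -/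
noncomputable def Dual (S : σ.symb) (tsQ : Fin (σ.ar S) → VTerm σ) : Struct σ where
  dom := BDom (Term.vsub (σ := σ) (.inr ⟨S, tsQ⟩))
  rel R := {vs |
    (∀ us ∈ Term.esub (σ := σ) (.inr ⟨S, tsQ⟩) R, ∀ i : Fin (σ.ar R),
        VTerm.pr R i us ∈ Term.vsub (σ := σ) (.inr ⟨S, tsQ⟩) →
        andT _ us vs → bext _ (vs i) (.pr R i us) = true) ∧
    (∀ h : R = S, ¬ andT _ (fun j => tsQ (Fin.cast (congrArg σ.ar h) j)) vs)}

theorem HomEx.trans {A B C : Struct σ} : HomEx A B → HomEx B C → HomEx A C := by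
  rintro ⟨f, hf⟩ ⟨g, hg⟩
  exact ⟨g ∘ f, fun R x hx => hg R _ (hf R x hx)⟩

/-- The vertex `a` of `A` satisfies the V-term `t`: some homomorphism from the tree `T(t)` to `A`
sends the root to `a`. -/
def VTerm.SatAt (t : VTerm σ) (A : Struct σ) (a : A.dom) : Prop :=
  ∃ f, IsHom t.tree A f ∧ f t.root = a

section EdgeTree

variable {A : Struct σ} {R : σ.symb} {ts : Fin (σ.ar R) → VTerm σ}

theorem isHom_edgeTree_iff {f : edgeDom R ts → A.dom} :
    IsHom (ETerm.tree R ts) A f ↔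
      (fun j => f (edgeRoot R ts j)) ∈ A.rel R ∧
        ∀ j, IsHom (ts j).tree A fun y => f ⟨j, y⟩ := by
  constructor
  · intro hf
    exact ⟨hf R _ (.inr ⟨rfl, rfl⟩), fun j U y hy => hf U _ (.inl ⟨j, y, hy, rfl⟩)⟩
  · rintro ⟨hroot, hbranch⟩ U _ (⟨j, y, hy, rfl⟩ | ⟨rfl, rfl⟩)
    · exact hbranch j U y hy
    · exact hroot

theorem exists_isHom_edgeTree_iff {x : Fin (σ.ar R) → A.dom} :
    (∃ f, IsHom (ETerm.tree R ts) A f ∧ ∀ j, f (edgeRoot R ts j) = x j) ↔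
      x ∈ A.rel R ∧ ∀ j, (ts j).SatAt A (x j) := by
  constructor
  · rintro ⟨f, hf, hx⟩
    obtain rfl : (fun j => f (edgeRoot R ts j)) = x := funext hx
    obtain ⟨hroot, hbranch⟩ := isHom_edgeTree_iff.1 hf
    exact ⟨hroot, fun j => ⟨_, hbranch j, rfl⟩⟩
  · rintro ⟨hx, hsat⟩
    choose f hf hroot using hsat
    obtain rfl : (fun j => f j (ts j).root) = x := funext hroot
    exact ⟨fun p => f p.1 p.2, isHom_edgeTree_iff.2 ⟨hx, hf⟩, fun _ => rfl⟩

theorem homEx_edgeTree_iff :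
    HomEx (ETerm.tree R ts) A ↔ ∃ x ∈ A.rel R, ∀ j, (ts j).SatAt A (x j) := by
  simp only [← exists_isHom_edgeTree_iff]
  exact ⟨fun ⟨f, hf⟩ => ⟨_, f, hf, fun _ => rfl⟩, fun ⟨_, f, hf, _⟩ => ⟨f, hf⟩⟩

end EdgeTree

namespace VTerm

theorem satAt_vertex (A : Struct σ) (a : A.dom) : (vertex : VTerm σ).SatAt A a :=
  ⟨fun _ => a, fun _ _ h => h.elim, rfl⟩

theorem satAt_pr_iff {A : Struct σ} {R : σ.symb} {i : Fin (σ.ar R)}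
    {ts : Fin (σ.ar R) → VTerm σ} {a : A.dom} :
    (pr R i ts).SatAt A a ↔ ∃ x ∈ A.rel R, x i = a ∧ ∀ j, (ts j).SatAt A (x j) := by
  constructor
  · rintro ⟨f, hf, rfl⟩
    obtain ⟨hx, hsat⟩ := exists_isHom_edgeTree_iff.1 ⟨f, hf, fun _ => rfl⟩
    exact ⟨_, hx, rfl, hsat⟩
  · rintro ⟨x, hx, rfl, hsat⟩
    obtain ⟨f, hf, hroot⟩ := exists_isHom_edgeTree_iff.2 ⟨hx, hsat⟩
    exact ⟨f, hf, hroot i⟩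

theorem self_mem_vsub : ∀ t : VTerm σ, t ∈ t.vsub
  | .vertex => rfl
  | .pr .. => .inl rfl

theorem mem_vsub_of_mem_esub {t : VTerm σ} {R : σ.symb} {us : Fin (σ.ar R) → VTerm σ}
    (h : us ∈ t.esub R) (j : Fin (σ.ar R)) : us j ∈ t.vsub := by
  induction t with
  | vertex => exact h.elim
  | pr R' i ts ih =>
    obtain ⟨rfl, rfl⟩ | ⟨k, hk⟩ := h
    · exact .inr (Set.mem_iUnion.2 ⟨j, self_mem_vsub _⟩)
    · exact .inr (Set.mem_iUnion.2 ⟨k, ih k hk⟩)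

theorem mem_esub_of_pr_mem_vsub {t : VTerm σ} {R : σ.symb} {i : Fin (σ.ar R)}
    {us : Fin (σ.ar R) → VTerm σ} (h : pr R i us ∈ t.vsub) : us ∈ t.esub R := by
  induction t with
  | vertex => cases h
  | pr R' i' ts ih =>
    obtain h | h := h
    · cases h
      exact .inl ⟨rfl, rfl⟩
    · obtain ⟨k, hk⟩ := Set.mem_iUnion.1 h
      exact .inr ⟨k, ih k hk⟩

end VTerm

namespace Term

/-- The R-term `edge_R(ts)` as a term. -/
abbrev edge (R : σ.symb) (ts : Fin (σ.ar R) → VTerm σ) : Term σ := .inr ⟨R, ts⟩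

theorem self_mem_esub_edge (R : σ.symb) (ts : Fin (σ.ar R) → VTerm σ) :
    ts ∈ (edge R ts).esub R :=
  .inl ⟨rfl, rfl⟩

theorem mem_vsub_of_mem_esub {t : Term σ} {R : σ.symb} {us : Fin (σ.ar R) → VTerm σ}
    (h : us ∈ t.esub R) (j : Fin (σ.ar R)) : us j ∈ t.vsub := by
  obtain t | ⟨S, ts⟩ := t
  · exact VTerm.mem_vsub_of_mem_esub h j
  · obtain ⟨rfl, rfl⟩ | ⟨k, hk⟩ := h
    · exact Set.mem_iUnion.2 ⟨j, VTerm.self_mem_vsub _⟩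
    · exact Set.mem_iUnion.2 ⟨k, VTerm.mem_vsub_of_mem_esub hk j⟩

theorem mem_esub_of_pr_mem_vsub {t : Term σ} {R : σ.symb} {i : Fin (σ.ar R)}
    {us : Fin (σ.ar R) → VTerm σ} (h : VTerm.pr R i us ∈ t.vsub) : us ∈ t.esub R := by
  obtain t | ⟨S, ts⟩ := t
  · exact VTerm.mem_esub_of_pr_mem_vsub h
  · obtain ⟨k, hk⟩ := Set.mem_iUnion.1 h
    exact .inr ⟨k, VTerm.mem_esub_of_pr_mem_vsub hk⟩

end Term

theorem bext_vertex {TV : Set (VTerm σ)} (h : .vertex ∈ TV) (v : BDom TV) :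
    bext TV v .vertex = true :=
  (dif_pos h).trans (v.2 h)

open Classical in
/-- The tuple recording which V-terms of `TV` the vertex `a` of `A` satisfies; for `TV` the
V-subterms of `t_Q`, this is the map witnessing `A → D(t_Q)`. -/
noncomputable def satProfile (A : Struct σ) (TV : Set (VTerm σ)) (a : A.dom) : BDom TV :=
  ⟨fun t => decide (t.1.SatAt A a), fun _ => decide_eq_true (VTerm.satAt_vertex A a)⟩

theorem bext_satProfile {A : Struct σ} {TV : Set (VTerm σ)} {a : A.dom} {t : VTerm σ} :
    bext TV (satProfile A TV a) t = true ↔ t ∈ TV ∧ t.SatAt A a := by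
  by_cases h : t ∈ TV <;> simp [bext, satProfile, h]

theorem andT_satProfile {A : Struct σ} {TV : Set (VTerm σ)} {R : σ.symb}
    {us : Fin (σ.ar R) → VTerm σ} {x : Fin (σ.ar R) → A.dom} :
    andT TV us (fun j => satProfile A TV (x j)) ↔ ∀ j, us j ∈ TV ∧ (us j).SatAt A (x j) :=
  forall_congr' fun _ => bext_satProfile

section Dual

variable {S : σ.symb} {tsQ : Fin (σ.ar S) → VTerm σ}

theorem bext_of_satAt_dual {t : VTerm σ} (ht : t ∈ (Term.edge S tsQ).vsub)
    {v : (Dual S tsQ).dom} (hsat : t.SatAt (Dual S tsQ) v) : bext _ v t = true := by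
  induction t generalizing v with
  | vertex => exact bext_vertex ht v
  | pr R i us ih =>
    obtain ⟨x, hx, rfl, hargs⟩ := VTerm.satAt_pr_iff.1 hsat
    have hus : us ∈ (Term.edge S tsQ).esub R := Term.mem_esub_of_pr_mem_vsub ht
    exact hx.1 us hus i ht fun j => ih j (Term.mem_vsub_of_mem_esub hus j) (hargs j)

theorem not_homEx_edgeTree_dual : ¬ HomEx (ETerm.tree S tsQ) (Dual S tsQ) := by
  intro h
  obtain ⟨x, hx, hsat⟩ := homEx_edgeTree_iff.1 h
  exact hx.2 rfl fun j =>
    bext_of_satAt_dual (Term.mem_vsub_of_mem_esub (Term.self_mem_esub_edge S tsQ) j) (hsat j)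

theorem isHom_satProfile {A : Struct σ} (hA : ¬ HomEx (ETerm.tree S tsQ) A) :
    IsHom A (Dual S tsQ) (satProfile A _) := by
  refine fun R x hx => ⟨fun us _ i hi hand => ?_, ?_⟩
  · have hsat : (VTerm.pr R i us).SatAt A (x i) :=
      VTerm.satAt_pr_iff.2 ⟨x, hx, rfl, fun j => (andT_satProfile.1 hand j).2⟩
    exact bext_satProfile.2 ⟨hi, hsat⟩
  · rintro rfl hand
    exact hA (homEx_edgeTree_iff.2 ⟨x, hx, fun j => (andT_satProfile.1 hand j).2⟩)

theorem homEx_dual_iff {A : Struct σ} :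
    HomEx A (Dual S tsQ) ↔ ¬ HomEx (ETerm.tree S tsQ) A :=
  ⟨fun hA hQ => not_homEx_edgeTree_dual (hQ.trans hA), fun hA => ⟨_, isHom_satProfile hA⟩⟩

end Dual

/-- for every structure `Q` homomorphically equivalent to the tree `T(t_Q)` of an
S-term `t_Q = edge_S(tsQ)`, the structure `D(t_Q)` is a dual of `Q`. -/
theorem dual_of_tree {σ : Signature} (S : σ.symb) (tsQ : Fin (σ.ar S) → VTerm σ)
    (Q : Struct σ) (h1 : HomEx Q (ETerm.tree S tsQ)) (h2 : HomEx (ETerm.tree S tsQ) Q) :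
    ∀ A : Struct σ, HomEx A (Dual S tsQ) ↔ ¬ HomEx Q A :=
  fun _ => homEx_dual_iff.trans (not_congr ⟨h1.trans, h2.trans⟩)
end

section
/- In the setting of the template with P = V_1 and the construction Ω described in the context: if f : Γ(A) → B is a homomorphism, then the map g : A → Ω(B) defined by g(u)_t = { f ∘ h : h a homomorphism T(t) → A with h(r_t) = u } for each t ∈ 𝒯_V is a well-defined homomorphism A → Ω(B). In particular, if there is a homomorphism Γ(A) → B, then there is a homomorphism A → Ω(B). -/
variable {σ τ υ : Signature}

/-- The central Pultr functor for the template where `P = V₁` is a single vertex with empty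
relations, `Q_R = T(tq R)` and the map `ε_{i,R}` selects the element `x R i` of `Q_R`. -/
def GammaV (tq : τ.symb → Term σ) (x : ∀ R : τ.symb, Fin (τ.ar R) → ((tq R).tree).dom)
    (A : Struct σ) : Struct τ where
  dom := A.dom
  rel R := {y | ∃ r : ((tq R).tree).dom → A.dom, IsHom ((tq R).tree) A r ∧ ∀ i, y i = r (x R i)}

/-- `𝒯_V`: all V-subterms of the chosen terms `t_R`. -/
def TVs (tq : τ.symb → Term σ) : Set (VTerm σ) := ⋃ R, (tq R).vsub

/-- `𝒯_S`: all S-subterms of the chosen terms `t_R`. -/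
def TEs (tq : τ.symb → Term σ) (S : σ.symb) : Set (Fin (σ.ar S) → VTerm σ) := ⋃ R, (tq R).esub S

/-- Domain of `Ω(B)`: tuples of sets of homomorphisms `Γ(T(t)) → B`, indexed by `t ∈ 𝒯_V`,
whose entry at `vertex` is a singleton. -/
def OmVDom (tq : τ.symb → Term σ) (x : ∀ R : τ.symb, Fin (τ.ar R) → ((tq R).tree).dom)
    (B : Struct τ) : Type :=
  {U : (t : {t : VTerm σ // t ∈ TVs tq}) → Set ((t.1.tree).dom → B.dom) //
    (∀ t, ∀ f ∈ U t, IsHom (GammaV tq x t.1.tree) B f) ∧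
    (∀ h : VTerm.vertex ∈ TVs tq, ∃! f, f ∈ U ⟨.vertex, h⟩)}

open Classical in
/-- The entry of `U` at the V-term `t` (by convention `∅` if `t ∉ 𝒯_V`). -/
noncomputable def UextV (tq : τ.symb → Term σ)
    (x : ∀ R : τ.symb, Fin (τ.ar R) → ((tq R).tree).dom)
    (B : Struct τ) (U : OmVDom tq x B) (t : VTerm σ) : Set (t.tree.dom → B.dom) :=
  if h : t ∈ TVs tq then U.1 ⟨t, h⟩ else ∅

/-- `⨉_t(Us) = {f₁ ∪ ⋯ ∪ f_k : f_i ∈ (Us i)_{ts i}}` for the S-term `t = edge_S(ts)`: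
maps on the disjoint union all of whose components lie in the prescribed sets. -/
def timesV (tq : τ.symb → Term σ) (x : ∀ R : τ.symb, Fin (τ.ar R) → ((tq R).tree).dom)
    (B : Struct τ) (S : σ.symb) (ts : Fin (σ.ar S) → VTerm σ)
    (Us : Fin (σ.ar S) → OmVDom tq x B) : Set (edgeDom S ts → B.dom) :=
  {g | ∀ j, (fun z => g ⟨j, z⟩) ∈ UextV tq x B (Us j) (ts j)}

/-- The right adjoint `Ω` for the template with `P = V₁`. -/
noncomputable def OmegaV (tq : τ.symb → Term σ)
    (x : ∀ R : τ.symb, Fin (τ.ar R) → ((tq R).tree).dom) (B : Struct τ) : Struct σ where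
  dom := OmVDom tq x B
  rel S := {Us |
    (∀ ts ∈ TEs tq S, ∀ i : Fin (σ.ar S), VTerm.pr S i ts ∈ TVs tq →
        ∀ g ∈ timesV tq x B S ts Us, g ∈ UextV tq x B (Us i) (.pr S i ts)) ∧
    (∀ ts ∈ TEs tq S, ∀ g ∈ timesV tq x B S ts Us,
        IsHom (GammaV tq x (ETerm.tree S ts)) B g)}

section

variable {tq : τ.symb → Term σ} {x : ∀ R : τ.symb, Fin (τ.ar R) → ((tq R).tree).dom}
  {A : Struct σ} {B : Struct τ}

theorem IsHom.comp {C D E : Struct σ} {g : D.dom → E.dom} {h : C.dom → D.dom}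
    (hg : IsHom D E g) (hh : IsHom C D h) : IsHom C E (g ∘ h) :=
  fun R y hy => hg R _ (hh R y hy)

theorem IsHom.gammaV {C D : Struct σ} {h : C.dom → D.dom} (hh : IsHom C D h) :
    IsHom (GammaV tq x C) (GammaV tq x D) h := by
  rintro R y ⟨r, hr, hy⟩
  exact ⟨h ∘ r, hh.comp hr, fun i => congrArg h (hy i)⟩

theorem isHom_tree_vertex (h : (VTerm.vertex : VTerm σ).tree.dom → A.dom) :
    IsHom VTerm.vertex.tree A h :=
  fun _ _ hy => hy.elim

theorem ETerm.isHom_tree_iff {S : σ.symb} {ts : Fin (σ.ar S) → VTerm σ}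
    {h : edgeDom S ts → A.dom} :
    IsHom (ETerm.tree S ts) A h ↔
      (∀ j, IsHom (ts j).tree A fun z => h ⟨j, z⟩) ∧ h ∘ edgeRoot S ts ∈ A.rel S := by
  constructor
  · intro hh
    exact ⟨fun j R y hy => hh R _ (.inl ⟨j, y, hy, rfl⟩), hh S _ (.inr ⟨rfl, rfl⟩)⟩
  · rintro ⟨hsub, hroot⟩ R _ (⟨j, y, hy, rfl⟩ | ⟨rfl, rfl⟩)
    · exact hsub j R y hy
    · exact hroot

/-- The homomorphisms `h : T(t) → A` with `h(r_t) = u`. -/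
def rootedHoms (A : Struct σ) (t : VTerm σ) (u : A.dom) : Set (t.tree.dom → A.dom) :=
  {h | IsHom t.tree A h ∧ h t.root = u}

theorem rootedHoms_vertex (u : A.dom) : rootedHoms A .vertex u = {fun _ => u} :=
  Set.ext fun _ => ⟨fun hh => funext fun _ => hh.2, fun hh => ⟨isHom_tree_vertex _, congrFun hh _⟩⟩

theorem mem_rootedHoms_pr {S : σ.symb} {i : Fin (σ.ar S)} {ts : Fin (σ.ar S) → VTerm σ}
    {u : A.dom} {h : edgeDom S ts → A.dom} :
    h ∈ rootedHoms A (.pr S i ts) u ↔ IsHom (ETerm.tree S ts) A h ∧ h (edgeRoot S ts i) = u :=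
  Iff.rfl

theorem exists_isHom_of_forall_mem_image_rootedHoms {β : Type*} {f : A.dom → β} {S : σ.symb}
    {y : Fin (σ.ar S) → A.dom} (hy : y ∈ A.rel S) {ts : Fin (σ.ar S) → VTerm σ}
    {d : edgeDom S ts → β}
    (hd : ∀ j, (fun z => d ⟨j, z⟩) ∈ (f ∘ ·) '' rootedHoms A (ts j) (y j)) :
    ∃ h : edgeDom S ts → A.dom,
      IsHom (ETerm.tree S ts) A h ∧ h ∘ edgeRoot S ts = y ∧ f ∘ h = d := by
  choose h hh hfh using hd
  let hglue : edgeDom S ts → A.dom := fun z => h z.1 z.2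
  have hroot : hglue ∘ edgeRoot S ts = y := funext fun j => (hh j).2
  have hhom : IsHom (ETerm.tree S ts) A hglue :=
    ETerm.isHom_tree_iff.2 ⟨fun j => (hh j).1, by rwa [hroot]⟩
  exact ⟨hglue, hhom, hroot, funext fun z => congrFun (hfh z.1) z.2⟩

theorem mem_uextV {U : OmVDom tq x B} {t : VTerm σ} {d : t.tree.dom → B.dom} :
    d ∈ UextV tq x B U t ↔ ∃ ht : t ∈ TVs tq, d ∈ U.1 ⟨t, ht⟩ := by
  by_cases ht : t ∈ TVs tq <;> simp [UextV, ht]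

/-- The map `g : A → Ω(B)` induced by a homomorphism `f : Γ(A) → B`, with entries
`g(u)_t = {f ∘ h : h : T(t) → A a homomorphism with h(r_t) = u}`. -/
def IsHom.toOmegaV {f : A.dom → B.dom} (hf : IsHom (GammaV tq x A) B f) (u : A.dom) :
    OmVDom tq x B where
  val t := (f ∘ ·) '' rootedHoms A t.1 u
  property := by
    constructor
    · rintro t _ ⟨h, hh, rfl⟩
      exact hf.comp hh.1.gammaV
    · intro _
      simp only [rootedHoms_vertex, Set.image_singleton, Set.mem_singleton_iff, existsUnique_eq]

theorem IsHom.exists_isHom_of_mem_timesV {f : A.dom → B.dom} (hf : IsHom (GammaV tq x A) B f)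
    {S : σ.symb} {y : Fin (σ.ar S) → A.dom} (hy : y ∈ A.rel S) {ts : Fin (σ.ar S) → VTerm σ}
    {d : edgeDom S ts → B.dom} (hd : d ∈ timesV tq x B S ts fun i => hf.toOmegaV (y i)) :
    ∃ h : edgeDom S ts → A.dom,
      IsHom (ETerm.tree S ts) A h ∧ h ∘ edgeRoot S ts = y ∧ f ∘ h = d :=
  exists_isHom_of_forall_mem_image_rootedHoms hy fun j => (mem_uextV.1 (hd j)).2

theorem IsHom.isHom_toOmegaV {f : A.dom → B.dom} (hf : IsHom (GammaV tq x A) B f) :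
    IsHom A (OmegaV tq x B) hf.toOmegaV := by
  intro S y hy
  constructor
  · intro ts _ i hi d hd
    obtain ⟨h, hh, hroot, rfl⟩ := hf.exists_isHom_of_mem_timesV hy hd
    exact mem_uextV.2 ⟨hi, h, mem_rootedHoms_pr.2 ⟨hh, congrFun hroot i⟩, rfl⟩
  · intro ts _ d hd
    obtain ⟨h, hh, -, rfl⟩ := hf.exists_isHom_of_mem_timesV hy hd
    exact hf.comp hh.gammaV

end

/-- if `f : Γ(A) → B` is a homomorphism then
`g(u)_t = { f ∘ h : h : T(t) → A a homomorphism with h(r_t) = u }` is a well-defined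
homomorphism `g : A → Ω(B)`; in particular `Γ(A) → B` implies `A → Ω(B)`. -/
theorem omegaV_easy_direction {σ τ : Signature} (tq : τ.symb → Term σ)
    (x : ∀ R : τ.symb, Fin (τ.ar R) → ((tq R).tree).dom)
    (A : Struct σ) (B : Struct τ)
    (f : (GammaV tq x A).dom → B.dom) (hf : IsHom (GammaV tq x A) B f) :
    ∃ g : A.dom → (OmegaV tq x B).dom,
      (∀ (u : A.dom) (t : {t : VTerm σ // t ∈ TVs tq}),
        (g u).1 t = {d | ∃ h : (t.1.tree).dom → A.dom,
            IsHom t.1.tree A h ∧ h t.1.root = u ∧ d = fun z => f (h z)}) ∧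
      IsHom A (OmegaV tq x B) g := by
  refine ⟨hf.toOmegaV, fun u t => Set.ext fun d => ?_, hf.isHom_toOmegaV⟩
  constructor
  · rintro ⟨h, ⟨hh, hu⟩, rfl⟩
    exact ⟨h, hh, hu, rfl⟩
  · rintro ⟨h, hh, hu, rfl⟩
    exact ⟨h, ⟨hh, hu⟩, rfl⟩
end

section
/- In the setting of the template with P = V_1 and the construction Ω described in the context: let t ∈ 𝒯 and let h : T(t) → Ω(B) be a homomorphism. Then the mapping d : T(t) → B, defined by d(v) = f(r_vertex) where f is the unique element of h(v)_vertex, is a homomorphism Γ(T(t)) → B. -/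
variable {σ τ υ : Signature}

theorem IsHom.comp_s9 {A B C : Struct σ} {g : B.dom → C.dom} {f : A.dom → B.dom}
    (hg : IsHom B C g) (hf : IsHom A B f) : IsHom A C (g ∘ f) :=
  fun R x hx => hg R _ (hf R x hx)

theorem ETerm.isHom_inclusion {S : σ.symb} (ts : Fin (σ.ar S) → VTerm σ) (j : Fin (σ.ar S)) :
    IsHom (ts j).tree (ETerm.tree S ts) (fun z => ⟨j, z⟩) :=
  fun _ y hy => Or.inl ⟨j, y, hy, rfl⟩

theorem ETerm.edgeRoot_mem_rel (S : σ.symb) (ts : Fin (σ.ar S) → VTerm σ) :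
    edgeRoot S ts ∈ (ETerm.tree S ts).rel S :=
  Or.inr ⟨rfl, rfl⟩

section Subterms

variable {S : σ.symb} {i : Fin (σ.ar S)} {us : Fin (σ.ar S) → VTerm σ}

theorem VTerm.self_mem_vsub_s9 (t : VTerm σ) : t ∈ t.vsub := by
  cases t with
  | vertex => exact Set.mem_singleton _
  | pr => exact Set.mem_insert _ _

theorem VTerm.vertex_mem_vsub (t : VTerm σ) : .vertex ∈ t.vsub := by
  induction t with
  | vertex => exact Set.mem_singleton _
  | pr R k ts ih => exact Or.inr (Set.mem_iUnion_of_mem k (ih k))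

theorem VTerm.mem_esub_of_pr_mem_vsub_s9 {t : VTerm σ} (h : .pr S i us ∈ t.vsub) :
    us ∈ t.esub S := by
  induction t with
  | vertex => cases h
  | pr R k ts ih =>
    rcases h with h_eq | h_sub
    · cases h_eq
      exact Or.inl ⟨rfl, rfl⟩
    · obtain ⟨j, hj⟩ := Set.mem_iUnion.1 h_sub
      exact Or.inr ⟨j, ih j hj⟩

theorem VTerm.apply_mem_vsub_of_mem_esub {t : VTerm σ} (h : us ∈ t.esub S)
    (j : Fin (σ.ar S)) : us j ∈ t.vsub := by
  induction t with
  | vertex => exact h.elim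
  | pr R k ts ih =>
    rcases h with ⟨-, rfl⟩ | ⟨l, hl⟩
    · exact Or.inr (Set.mem_iUnion_of_mem _ (self_mem_vsub_s9 _))
    · exact Or.inr (Set.mem_iUnion_of_mem l (ih l hl))

theorem Term.vertex_mem_vsub (q : Term σ) : .vertex ∈ q.vsub := by
  rcases q with t | ⟨R, ts⟩
  · exact t.vertex_mem_vsub
  · exact Set.mem_iUnion_of_mem ⟨0, σ.ar_pos R⟩ (VTerm.vertex_mem_vsub _)

theorem Term.mem_esub_of_pr_mem_vsub_s9 {q : Term σ} (h : .pr S i us ∈ q.vsub) :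
    us ∈ q.esub S := by
  rcases q with t | ⟨R, ts⟩
  · exact VTerm.mem_esub_of_pr_mem_vsub_s9 h
  · obtain ⟨j, hj⟩ := Set.mem_iUnion.1 h
    exact Or.inr ⟨j, VTerm.mem_esub_of_pr_mem_vsub_s9 hj⟩

theorem Term.apply_mem_vsub_of_mem_esub {q : Term σ} (h : us ∈ q.esub S)
    (j : Fin (σ.ar S)) : us j ∈ q.vsub := by
  rcases q with t | ⟨R, ts⟩
  · exact VTerm.apply_mem_vsub_of_mem_esub h j
  · rcases h with ⟨-, rfl⟩ | ⟨l, hl⟩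
    · exact Set.mem_iUnion_of_mem _ (VTerm.self_mem_vsub_s9 _)
    · exact Set.mem_iUnion_of_mem l (VTerm.apply_mem_vsub_of_mem_esub hl j)

variable {tq : τ.symb → Term σ}

theorem vertex_mem_TVs_of_mem {t : VTerm σ} (ht : t ∈ TVs tq) : .vertex ∈ TVs tq := by
  obtain ⟨R, -⟩ := Set.mem_iUnion.1 ht
  exact Set.mem_iUnion_of_mem R (tq R).vertex_mem_vsub

theorem mem_TEs_of_pr_mem_TVs (h : .pr S i us ∈ TVs tq) : us ∈ TEs tq S :=
  Set.mem_iUnion.2 ((Set.mem_iUnion.1 h).imp fun _ => Term.mem_esub_of_pr_mem_vsub_s9)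

theorem apply_mem_TVs_of_mem_TEs (h : us ∈ TEs tq S) (j : Fin (σ.ar S)) : us j ∈ TVs tq :=
  Set.mem_iUnion.2 ((Set.mem_iUnion.1 h).imp fun _ hR => Term.apply_mem_vsub_of_mem_esub hR j)

theorem vertex_mem_TVs_of_mem_TEs (h : us ∈ TEs tq S) : .vertex ∈ TVs tq :=
  vertex_mem_TVs_of_mem (apply_mem_TVs_of_mem_TEs h ⟨0, σ.ar_pos S⟩)

end Subterms

section Omega

variable {tq : τ.symb → Term σ} {x : ∀ R : τ.symb, Fin (τ.ar R) → ((tq R).tree).dom}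
  {B : Struct τ}

theorem UextV_of_mem (U : OmVDom tq x B) {t : VTerm σ} (ht : t ∈ TVs tq) :
    UextV tq x B U t = U.1 ⟨t, ht⟩ :=
  dif_pos ht

theorem isHom_of_mem_UextV {U : OmVDom tq x B} {t : VTerm σ} {f : t.tree.dom → B.dom}
    (hf : f ∈ UextV tq x B U t) : IsHom (GammaV tq x t.tree) B f := by
  by_cases ht : t ∈ TVs tq
  · rw [UextV_of_mem U ht] at hf
    exact U.2.1 ⟨t, ht⟩ f hf
  · rw [UextV, dif_neg ht] at hf
    exact hf.elim

/-- The element of `B` encoded by `U ∈ Ω(B)`: the value at `r_vertex` of the unique element of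
`U_vertex`. The map `d` induced by `h : T(t) → Ω(B)` is `OmVDom.point hv ∘ h`. -/
noncomputable def OmVDom.point (hv : .vertex ∈ TVs tq) (U : OmVDom tq x B) : B.dom :=
  (U.2.2 hv).choose PUnit.unit

theorem OmVDom.point_eq_of_mem {hv : .vertex ∈ TVs tq} {U : OmVDom tq x B}
    {f : (VTerm.vertex : VTerm σ).tree.dom → B.dom} (hf : f ∈ U.1 ⟨.vertex, hv⟩) :
    U.point hv = f PUnit.unit :=
  congrFun ((U.2.2 hv).unique (U.2.2 hv).choose_spec.1 hf) PUnit.unit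

theorem OmVDom.const_point_mem_UextV (hv : .vertex ∈ TVs tq) (U : OmVDom tq x B) :
    (fun _ => U.point hv) ∈ UextV tq x B U .vertex := by
  rw [UextV_of_mem U hv]
  exact (U.2.2 hv).choose_spec.1

theorem point_comp_mem_UextV (hv : .vertex ∈ TVs tq) {t : VTerm σ} (ht : t ∈ TVs tq)
    {h : t.tree.dom → OmVDom tq x B} (hh : IsHom t.tree (OmegaV tq x B) h) :
    OmVDom.point hv ∘ h ∈ UextV tq x B (h t.root) t := by
  induction t with
  | vertex => exact (h PUnit.unit).const_point_mem_UextV hv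
  | pr S i ts ih =>
    -- `T(pr_i(e))` and `T(e)` agree definitionally.
    have h_edge : IsHom (ETerm.tree S ts) (OmegaV tq x B) h := hh
    have hts : ts ∈ TEs tq S := mem_TEs_of_pr_mem_TVs ht
    have h_times : OmVDom.point hv ∘ h ∈ timesV tq x B S ts (h ∘ edgeRoot S ts) := fun j =>
      ih j (apply_mem_TVs_of_mem_TEs hts j) (h_edge.comp_s9 (ETerm.isHom_inclusion ts j))
    obtain ⟨hA1, -⟩ := h_edge S _ (ETerm.edgeRoot_mem_rel S ts)
    exact hA1 ts hts i ht _ h_times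

theorem point_comp_mem_timesV (hv : .vertex ∈ TVs tq) {S : σ.symb}
    {ts : Fin (σ.ar S) → VTerm σ} (hts : ts ∈ TEs tq S)
    {h : (ETerm.tree S ts).dom → OmVDom tq x B}
    (hh : IsHom (ETerm.tree S ts) (OmegaV tq x B) h) :
    OmVDom.point hv ∘ h ∈ timesV tq x B S ts (h ∘ edgeRoot S ts) := fun j =>
  point_comp_mem_UextV hv (apply_mem_TVs_of_mem_TEs hts j)
    (hh.comp_s9 (ETerm.isHom_inclusion ts j))

end Omega

/-- for `t ∈ 𝒯` and a homomorphism `h : T(t) → Ω(B)`, the map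
`d : T(t) → B` sending `v` to `f(r_vertex)`, where `f` is the unique element of
`h(v)_vertex`, is a homomorphism `Γ(T(t)) → B`.  (Stated for V-terms and for R-terms in `𝒯`.) -/
theorem omegaV_tree_lemma {σ τ : Signature} (tq : τ.symb → Term σ)
    (x : ∀ R : τ.symb, Fin (τ.ar R) → ((tq R).tree).dom) (B : Struct τ) :
    (∀ t : VTerm σ, t ∈ TVs tq →
      ∀ h : (t.tree).dom → (OmegaV tq x B).dom, IsHom t.tree (OmegaV tq x B) h →
        ∃ d : (t.tree).dom → B.dom,
          (∀ (v : (t.tree).dom) (hv : VTerm.vertex ∈ TVs tq)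
              (f : ((VTerm.vertex : VTerm σ).tree).dom → B.dom),
              f ∈ (h v).1 ⟨.vertex, hv⟩ → d v = f PUnit.unit) ∧
          IsHom (GammaV tq x t.tree) B d) ∧
    (∀ (S : σ.symb) (ts : Fin (σ.ar S) → VTerm σ), ts ∈ TEs tq S →
      ∀ h : (ETerm.tree S ts).dom → (OmegaV tq x B).dom,
        IsHom (ETerm.tree S ts) (OmegaV tq x B) h →
        ∃ d : (ETerm.tree S ts).dom → B.dom,
          (∀ (v : (ETerm.tree S ts).dom) (hv : VTerm.vertex ∈ TVs tq)
              (f : ((VTerm.vertex : VTerm σ).tree).dom → B.dom),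
              f ∈ (h v).1 ⟨.vertex, hv⟩ → d v = f PUnit.unit) ∧
          IsHom (GammaV tq x (ETerm.tree S ts)) B d) := by
  refine ⟨fun t ht h hh => ?_, fun S ts hts h hh => ?_⟩
  · have hv := vertex_mem_TVs_of_mem ht
    have hd := point_comp_mem_UextV hv ht hh
    exact ⟨OmVDom.point hv ∘ h, fun _ _ _ => OmVDom.point_eq_of_mem, isHom_of_mem_UextV hd⟩
  · have hv := vertex_mem_TVs_of_mem_TEs hts
    have hd := point_comp_mem_timesV hv hts hh
    obtain ⟨-, hA2⟩ := hh S _ (ETerm.edgeRoot_mem_rel S ts)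
    exact ⟨OmVDom.point hv ∘ h, fun _ _ _ => OmVDom.point_eq_of_mem, hA2 ts hts _ hd⟩
end
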